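/- Let G be a finite group with trivial Frattini subgroup, and let V be a chief factor of G and U a nontrivial normal subgroup of G with I_G(V) = R_G(V) × U. If K is a subgroup of G with KU = G and KR_G(V) = G, then K = G. -/

import Mathlib

/-!
Definitions supporting the formalization of
"An upper bound on the Chebotarev invariant of a finite group" (Lucchini–Tracey).
-/

open scoped BigOperators

namespace ChebotarevPaper

/-- A `k`-tuple of elements of `G` invariably generates `G` if, replacing each entry by an
arbitrary conjugate, the resulting elements always generate `G`. -/
def InvGen (G : Type*) [Group G] {k : ℕ} (f : Fin k → G) : Prop :=
  ∀ c : Fin k → G, Subgroup.closure (Set.range fun i => c i * f i * (c i)⁻¹) = ⊤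

/-- The probability that `k` independent uniformly random elements of `G` invariably
generate `G`. -/
noncomputable def probInvGen (G : Type*) [Group G] (k : ℕ) : ℝ :=
  Nat.card {f : Fin k → G // InvGen G f} / (Nat.card G : ℝ) ^ k

/-- The Chebotarev invariant `C(G)`:  `C(G) = Σ_{k ≥ 0} (1 − P_I(G,k))`, where `P_I(G,k)`
is the probability that `k` independent uniformly random elements of `G` invariably
generate `G`. -/
noncomputable def cheb (G : Type*) [Group G] : ℝ :=
  ∑' k : ℕ, (1 - probInvGen G k)

/-- The probability that `k` independent uniformly random elements of `G` generate `G`. -/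
noncomputable def probGen (G : Type*) [Group G] (k : ℕ) : ℝ :=
  Nat.card {f : Fin k → G // Subgroup.closure (Set.range f) = ⊤} / (Nat.card G : ℝ) ^ k

/-- The expected number of uniformly random elements of `G` needed to generate `G`. -/
noncomputable def expectedGen (G : Type*) [Group G] : ℝ :=
  ∑' k : ℕ, (1 - probGen G k)

/-- `d(G)`: the minimal number of generators of `G`. -/
noncomputable def minGen (G : Type*) [Group G] : ℕ :=
  sInf {n | ∃ f : Fin n → G, Subgroup.closure (Set.range f) = ⊤}

/-- `σ` has the defining property of the constant `σ = 2.118456563…` of Pomerance: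
for every finite group `X`, the expected number of uniformly random elements needed to
generate `X` is at most `d(X) + σ`. -/
def IsPomeranceConst (σ : ℝ) : Prop :=
  ∀ (X : Type) [Group X] [Finite X], expectedGen X ≤ minGen X + σ

variable (G : Type*) [Group G]

/-- `(X, Y)` is a chief factor of `G`:  both are normal in `G`, `Y < X`, and no normal
subgroup of `G` lies strictly between them (i.e. `X/Y` is a minimal normal subgroup of
`G/Y`). -/
def IsChiefFactorPair (X Y : Subgroup G) : Prop :=
  X.Normal ∧ Y.Normal ∧ Y < X ∧
    ∀ N : Subgroup G, N.Normal → Y ≤ N → N ≤ X → N = Y ∨ N = X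

/-- The chief factor `X/Y` is complemented: there is `U ≤ G` with `UX = G` and
`U ⊓ X = Y`. -/
def IsComplementedFactor (X Y : Subgroup G) : Prop :=
  ∃ U : Subgroup G, U ⊔ X = ⊤ ∧ U ⊓ X = Y

/-- The chief factor `X/Y` is a Frattini chief factor, i.e. `X/Y ≤ Frat(G/Y)`;
equivalently (and this is how we state it), `X/Y` is abelian and has no complement
in `G`. -/
def IsFrattiniFactor (X Y : Subgroup G) : Prop :=
  (∀ a b : G, a ∈ X → b ∈ X → a * b * a⁻¹ * b⁻¹ ∈ Y) ∧ ¬ IsComplementedFactor G X Y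

/-- The chief factor `X/Y` is central in `G`, i.e. `X/Y ≤ Z(G/Y)`. -/
def IsCentralFactor (X Y : Subgroup G) : Prop :=
  ∀ g x : G, x ∈ X → g * x * g⁻¹ * x⁻¹ ∈ Y

/-- The `G`-group `V` (a group with an action `a : G →* MulAut V` of `G` by automorphisms)
is `G`-isomorphic to the chief factor `X/Y` (on which `G` acts by conjugation): there is a
surjective homomorphism `X →* V` with kernel `Y` transforming conjugation by `g ∈ G` into
the action of `g` on `V`. -/
def RepresentsFactor {V : Type*} [Group V] (a : G →* MulAut V) (X Y : Subgroup G) : Prop :=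
  ∃ f : X →* V, Function.Surjective f ∧ (∀ x : X, f x = 1 ↔ (x : G) ∈ Y) ∧
    ∀ (g : G) (x y : X), (y : G) = g * (x : G) * g⁻¹ → f y = a g (f x)

/-- Two `G`-groups `(V₁, a₁)`, `(V₂, a₂)` are `G`-equivalent: there are isomorphisms
`φ : V₁ ≃* V₂` and `Φ : V₁ ⋊ G ≃* V₂ ⋊ G` making the natural diagram of the two
extensions `1 → Vᵢ → Vᵢ ⋊ G → G → 1` commute. -/
def GEquiv {V₁ V₂ : Type*} [Group V₁] [Group V₂]
    (a₁ : G →* MulAut V₁) (a₂ : G →* MulAut V₂) : Prop :=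
  ∃ (φ : V₁ ≃* V₂) (Φ : (V₁ ⋊[a₁] G) ≃* (V₂ ⋊[a₂] G)),
    (∀ v : V₁, Φ (SemidirectProduct.inl v) = SemidirectProduct.inl (φ v)) ∧
    ∀ x, (Φ x).right = x.right

/-- `G`-isomorphism of `G`-groups. -/
def GIso {V₁ V₂ : Type*} [Group V₁] [Group V₂]
    (a₁ : G →* MulAut V₁) (a₂ : G →* MulAut V₂) : Prop :=
  ∃ φ : V₁ ≃* V₂, ∀ (g : G) (v : V₁), φ (a₁ g v) = a₂ g (φ v)

/-- `N` is a minimal normal subgroup of `G`. -/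
def IsMinimalNormal (N : Subgroup G) : Prop :=
  N.Normal ∧ N ≠ ⊥ ∧ ∀ M : Subgroup G, M.Normal → M ≠ ⊥ → M ≤ N → M = N

/-- The socle of `G`: the subgroup generated by all minimal normal subgroups of `G`. -/
def socle : Subgroup G := sSup {N : Subgroup G | IsMinimalNormal G N}

instance socle_normal : (socle G).Normal := by
  constructor
  intro n hn g
  have h : socle G ≤ (socle G).comap (MulAut.conj g).toMonoidHom := by
    rw [socle]
    apply sSup_le
    intro N hN x hx
    have h1 : (MulAut.conj g).toMonoidHom x ∈ N := by
      simpa [MulAut.conj_apply] using hN.1.conj_mem x hx g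
    exact Subgroup.mem_comap.2 (le_sSup hN h1)
  have h2 := h hn
  simpa [MulAut.conj_apply] using h2

/-- The action of `G` (by conjugation, through `f : G →* Q`) on the socle of `Q`. -/
def socAct {Q : Type*} [Group Q] (f : G →* Q) : G →* MulAut (socle Q) :=
  MulAut.conjNormal.comp f

/-- The diagonal action of `G` on `V × V` induced by an action on `V`. -/
def prodAct {V : Type*} [Group V] (a : G →* MulAut V) : G →* MulAut (V × V) where
  toFun g := MulEquiv.prodCongr (a g) (a g)
  map_one' := by
    ext x <;> simp [MulEquiv.prodCongr, MulAut.one_apply]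
  map_mul' g h := by
    ext x <;> simp [MulEquiv.prodCongr, MulAut.mul_apply]

/-- The diagonal action of `H` on `V^u` induced by an action on `V`. -/
def diagAct (H : Type*) [Group H] {V : Type*} [Group V] (b : H →* MulAut V) (u : ℕ) :
    H →* MulAut (Fin u → V) where
  toFun g := MulEquiv.piCongrRight fun _ => b g
  map_one' := by
    ext x i; simp
  map_mul' g h := by
    ext x i; simp [MulAut.mul_apply]

variable {G}

/-- The elements `gs 0, …, gs (k-1)` of `G` satisfy the `V`-property in `G`: they all lie
in the union of the `G`-conjugates of some maximal subgroup `M` of `G` such that the socle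
of `G/core_G(M)` is `G`-equivalent to `V` or to `V × V`. -/
def SatisfyVProperty {V : Type*} [Group V] (a : G →* MulAut V) {k : ℕ}
    (gs : Fin k → G) : Prop :=
  ∃ M : Subgroup G, IsCoatom M ∧
    (GEquiv G (socAct G (QuotientGroup.mk' M.normalCore)) a ∨
      GEquiv G (socAct G (QuotientGroup.mk' M.normalCore)) (prodAct G a)) ∧
    ∀ i, ∃ x : G, x * gs i * x⁻¹ ∈ M

/-- `P*_{G,V}(k)`: the probability that `k` independent uniformly random elements of `G`
satisfy the `V`-property in `G`. -/
noncomputable def pStar {V : Type*} [Group V] (a : G →* MulAut V) (k : ℕ) : ℝ :=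
  Nat.card {gs : Fin k → G // SatisfyVProperty a gs} / (Nat.card G : ℝ) ^ k

/-- The collection of normal subgroups `N` of `G` such that `G/N` is isomorphic to the
monolithic primitive group `L_V` associated to `V` (that is, `V ⋊ (G/C_G(V))` if `V` is
abelian and `G/C_G(V)` otherwise; here `C_G(V)` is the kernel of the action of `G` on
`V`) and the socle of `G/N` is `G`-equivalent to `V`. -/
def crownNormals {V : Type*} [Group V] (a : G →* MulAut V) : Set (Subgroup G) :=
  {N | ∃ _ : N.Normal,
    ((∀ x y : V, x * y = y * x) →
      Nonempty ((G ⧸ N) ≃* (V ⋊[QuotientGroup.kerLift a] (G ⧸ a.ker)))) ∧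
    (¬ (∀ x y : V, x * y = y * x) → Nonempty ((G ⧸ N) ≃* (G ⧸ a.ker))) ∧
    GEquiv G (socAct G (QuotientGroup.mk' N)) a}

/-- `R_G(V)`: the intersection of all normal subgroups `N` of `G` with `G/N ≅ L_V` and
`soc(G/N)` `G`-equivalent to `V`. -/
def crownRadical {V : Type*} [Group V] (a : G →* MulAut V) : Subgroup G :=
  sInf (crownNormals a)

instance crownRadical_normal {V : Type*} [Group V] (a : G →* MulAut V) :
    (crownRadical a).Normal := by
  constructor
  intro n hn g
  rw [crownRadical, Subgroup.mem_sInf] at hn ⊢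
  intro p hp
  obtain ⟨hpN, hrest⟩ := hp
  exact hpN.conj_mem n (hn p ⟨hpN, hrest⟩) g

/-- `I_G(V)`: the preimage in `G` of the socle of `G/R_G(V)`; the `V`-crown of `G` is
`I_G(V)/R_G(V)`. -/
def crownSocle {V : Type*} [Group V] (a : G →* MulAut V) : Subgroup G :=
  (socle (G ⧸ crownRadical a)).comap (QuotientGroup.mk' (crownRadical a))

/-- A chief series of `G`: a chain `⊥ = N_0 < N_1 < … < N_len = ⊤` of normal subgroups
of `G` in which each factor `N_{i+1}/N_i` is a chief factor of `G`. -/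
structure ChiefSeries (G : Type*) [Group G] where
  len : ℕ
  ser : Fin (len + 1) → Subgroup G
  bot_eq : ser 0 = ⊥
  top_eq : ser (Fin.last len) = ⊤
  chief : ∀ i : Fin len, IsChiefFactorPair G (ser i.succ) (ser i.castSucc)

/-- `δ_V(G)` (for a `G`-module `V`): the number of complemented factors in the chief
series `S` of `G` which are `G`-isomorphic to `V`. -/
noncomputable def deltaIso {V : Type*} [Group V] (a : G →* MulAut V)
    (S : ChiefSeries G) : ℕ :=
  Nat.card {i : Fin S.len //
    IsComplementedFactor G (S.ser i.succ) (S.ser i.castSucc) ∧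
    RepresentsFactor G a (S.ser i.succ) (S.ser i.castSucc)}

/-- The chief factor `X/Y` of `G` is `G`-equivalent to the `G`-group `(V, a)`. -/
def FactorGEquiv (X Y : Subgroup G) {V : Type*} [Group V] (a : G →* MulAut V) : Prop :=
  ∃ (W : Type) (_ : Group W) (b : G →* MulAut W),
    RepresentsFactor G b X Y ∧ GEquiv G b a

/-- `δ_V(G)` (for a `G`-group `V`): the number of non-Frattini factors in the chief
series `S` of `G` which are `G`-equivalent to `V`. -/
noncomputable def deltaEquiv {V : Type*} [Group V] (a : G →* MulAut V)
    (S : ChiefSeries G) : ℕ :=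
  Nat.card {i : Fin S.len //
    ¬ IsFrattiniFactor G (S.ser i.succ) (S.ser i.castSucc) ∧
    FactorGEquiv (S.ser i.succ) (S.ser i.castSucc) a}

/-- Bundled `G`-group: a group together with an action of `G` by automorphisms. -/
structure GGroup (G : Type) [Group G] : Type 1 where
  carrier : Type
  [grp : Group carrier]
  act : G →* MulAut carrier

attribute [instance] GGroup.grp

/-- The action `b` of `H` on `V` is irreducible: `V` is nontrivial and has no proper
nontrivial (normal) `H`-invariant subgroup. -/
def IsIrreducibleGGroup (H : Type*) [Group H] {V : Type*} [Group V]
    (b : H →* MulAut V) : Prop :=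
  Nontrivial V ∧
    ∀ W : Subgroup V, W.Normal → (∀ (h : H) (v : V), v ∈ W → b h v ∈ W) → W = ⊥ ∨ W = ⊤

/-- The `H`-equivariant endomorphisms of `V` (for `H`-modules `V` this is
`End_H(V)`). -/
def EquivEnd (H : Type*) [Group H] {V : Type*} [Group V] (b : H →* MulAut V) :=
  {f : V →* V // ∀ (h : H) (v : V), f (b h v) = b h (f v)}

/-- `q_V := |End_H(V)|`. -/
noncomputable def endCard (H : Type*) [Group H] {V : Type*} [Group V]
    (b : H →* MulAut V) : ℕ :=
  Nat.card (EquivEnd H b)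

/-- `n_V := dim_{End_H(V)} V`, characterised by `|End_H(V)| ^ n_V = |V|` (for a finite
irreducible `H`-module `V`, `End_H(V)` is a field and `V` a vector space over it). -/
noncomputable def dimEnd (H : Type*) [Group H] {V : Type*} [Group V]
    (b : H →* MulAut V) : ℕ :=
  sInf {n : ℕ | endCard H b ^ n = Nat.card V}

/-- The set of derivations `ζ : H → V` (satisfying `ζ(h₁h₂) = ζ(h₁)^{h₂} · ζ(h₂)`). -/
def DerSet (H : Type*) [Group H] {V : Type*} [Group V] (b : H →* MulAut V) :
    Set (H → V) :=
  {ζ | ∀ h₁ h₂ : H, ζ (h₁ * h₂) = b h₂ (ζ h₁) * ζ h₂}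

/-- The set of inner derivations `h ↦ [h,v] = v^h · v⁻¹`. -/
def IderSet (H : Type*) [Group H] {V : Type*} [Group V] (b : H →* MulAut V) :
    Set (H → V) :=
  {ζ | ∃ v : V, ∀ h : H, ζ h = b h v * v⁻¹}

/-- `m := dim_{End_H(V)} H¹(H,V)` where `H¹(H,V) = Der(H,V)/Ider(H,V)`, characterised by
`|End_H(V)| ^ m · |Ider(H,V)| = |Der(H,V)|`. -/
noncomputable def h1Dim (H : Type*) [Group H] {V : Type*} [Group V]
    (b : H →* MulAut V) : ℕ :=
  sInf {m : ℕ | endCard H b ^ m * Nat.card (IderSet H b) = Nat.card (DerSet H b)}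

/-- The probability that a uniformly random element of `H` fixes a nonzero (i.e.
non-identity) vector of `V`. -/
noncomputable def fixProb (H : Type*) [Group H] {V : Type*} [Group V]
    (b : H →* MulAut V) : ℝ :=
  Nat.card {h : H // ∃ v : V, v ≠ 1 ∧ b h v = v} / (Nat.card H : ℝ)

/-- `A` is a set of representatives for the irreducible `G`-modules which are
`G`-isomorphic to a chief factor of `G` satisfying `P`:  every member of `A` is an
irreducible abelian `G`-group `G`-isomorphic to some chief factor satisfying `P`, and
every chief factor of `G` satisfying `P` is `G`-isomorphic to exactly one member
of `A`. -/
def IsModuleRepSet {G : Type} [Group G] (P : Subgroup G → Subgroup G → Prop)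
    (A : Finset (GGroup G)) : Prop :=
  (∀ V ∈ A, (∀ x y : V.carrier, x * y = y * x) ∧ IsIrreducibleGGroup G V.act ∧
      ∃ X Y : Subgroup G, IsChiefFactorPair G X Y ∧ P X Y ∧ RepresentsFactor G V.act X Y) ∧
  ∀ X Y : Subgroup G, IsChiefFactorPair G X Y → P X Y →
    ∃! V : GGroup G, V ∈ A ∧ RepresentsFactor G V.act X Y

/-- `A` is a set of representatives for the irreducible `G`-groups which are
`G`-equivalent to a chief factor of `G` satisfying `P`. -/
def IsGGroupRepSet {G : Type} [Group G] (P : Subgroup G → Subgroup G → Prop)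
    (A : Finset (GGroup G)) : Prop :=
  (∀ V ∈ A, IsIrreducibleGGroup G V.act ∧
      ∃ X Y : Subgroup G, IsChiefFactorPair G X Y ∧ P X Y ∧ FactorGEquiv X Y V.act) ∧
  ∀ X Y : Subgroup G, IsChiefFactorPair G X Y → P X Y →
    ∃! V : GGroup G, V ∈ A ∧ FactorGEquiv X Y V.act

/-!
Put `R = R_G(V)` and `I = I_G(V)`. Since `U` commutes with `R` and `G = KR`, the subgroup
`D = K ⊓ U` is normal in `G`. As `U` embeds into the socle `I/R`, which is completely reducible,
`D` has a normal complement `T` in `U`, and `G = KU` makes `K` a complement of `T` in `G`.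

It remains to see `T ≤ R`, which forces `T = ⊥` and `U ≤ K`. Let `ρ : G → K` be the retraction with
kernel `T`, let `N` be one of the normal subgroups intersected in `R`, and `π : G → G/N` the
projection. As `π` maps `T` into the socle of `G/N`, the epimorphisms `π` and `π ∘ ρ` agree modulo
this socle, and this makes `ker (π ∘ ρ)` another of the normal subgroups intersected in `R`. Hence
`R ≤ ker (π ∘ ρ)`. Writing `t ∈ T` as `k * r` with `k ∈ K` and `r ∈ R`, we get
`1 = ρ t = k * ρ r` with `ρ r ∈ N`, so `t = (ρ r)⁻¹ * r ∈ N`.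
-/

section Socle

variable {H : Type*} [Group H]

theorem IsMinimalNormal.le_or_disjoint {A N : Subgroup G} (hA : IsMinimalNormal G A)
    (hN : N.Normal) : A ≤ N ∨ Disjoint A N := by
  obtain ⟨hA, -, hAmin⟩ := hA
  rw [or_iff_not_imp_right, disjoint_iff]
  intro h
  exact inf_eq_left.1 (hAmin (A ⊓ N) inferInstance h inf_le_left)

theorem IsMinimalNormal.map {A : Subgroup G} (hA : IsMinimalNormal G A) {q : G →* H}
    (hq : Function.Surjective q) (hne : A.map q ≠ ⊥) : IsMinimalNormal H (A.map q) := by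
  refine ⟨hA.1.map q hq, hne, fun B hB hB_ne hBA => le_antisymm hBA ?_⟩
  rw [Subgroup.map_le_iff_le_comap]
  refine (hA.le_or_disjoint (hB.comap q)).resolve_right fun hdisj => hB_ne ?_
  rw [Subgroup.eq_bot_iff_forall]
  intro b hb
  obtain ⟨x, hx, rfl⟩ := hBA hb
  rw [Subgroup.disjoint_def.1 hdisj hx hb, map_one]

theorem map_socle_le {q : G →* H} (hq : Function.Surjective q) :
    (socle G).map q ≤ socle H := by
  rw [Subgroup.map_le_iff_le_comap]
  refine sSup_le fun A hA => Subgroup.map_le_iff_le_comap.1 ?_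
  by_cases hne : A.map q = ⊥
  · exact hne ▸ bot_le
  · exact le_sSup (hA.map hq hne)

theorem map_socle_eq (e : G ≃* H) : (socle G).map (e : G →* H) = socle H := by
  refine le_antisymm (map_socle_le e.surjective) ?_
  rw [Subgroup.map_equiv_eq_comap_symm, ← Subgroup.map_le_iff_le_comap]
  exact map_socle_le e.symm.surjective

/-- The isomorphism between socles induced by an isomorphism of groups. -/
def socleEquiv (e : G ≃* H) : socle G ≃* socle H :=
  (e.subgroupMap (socle G)).trans (MulEquiv.subgroupCongr (map_socle_eq e))

theorem coe_socleEquiv_apply (e : G ≃* H) (x : socle G) : (socleEquiv e x : H) = e x :=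
  rfl

theorem exists_normal_disjoint_socle_le_sup (D : Subgroup G) [D.Normal] :
    ∃ T : Subgroup G, T.Normal ∧ Disjoint D T ∧ socle G ≤ D ⊔ T := by
  -- Take `T` maximal: a minimal normal `A` outside `D ⊔ T` would keep `A ⊔ T` disjoint from `D`.
  obtain ⟨T, -, ⟨hT, hDT⟩, hTmax⟩ :=
    zorn_le_nonempty₀ {T : Subgroup G | T.Normal ∧ Disjoint D T}
      (fun c hc hchain S hS => by
        refine ⟨sSup c, ⟨Subgroup.sSup_normal c fun T hT => (hc hT).1, ?_⟩, fun T => le_sSup⟩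
        rw [Subgroup.disjoint_def]
        intro x hxD hx
        obtain ⟨T, hT, hxT⟩ := (Subgroup.mem_sSup_of_directedOn ⟨S, hS⟩ hchain.directedOn).1 hx
        exact Subgroup.disjoint_def.1 (hc hT).2 hxD hxT)
      ⊥ ⟨inferInstance, disjoint_bot_right⟩
  refine ⟨T, hT, hDT, sSup_le fun A hA => ?_⟩
  refine (hA.le_or_disjoint (Subgroup.sup_normal D T)).elim id fun hdisj => ?_
  have hA_normal := hA.1
  have hDAT : Disjoint D (A ⊔ T) := by
    rw [Subgroup.disjoint_def]
    intro d hd hdAT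
    obtain ⟨x, hx, t, ht, rfl⟩ := Subgroup.mem_sup_of_normal_right.1 hdAT
    have hx_mem : x ∈ D ⊔ T := by
      simpa using mul_mem (Subgroup.mem_sup_left hd) (Subgroup.mem_sup_right (inv_mem ht))
    obtain rfl : x = 1 := Subgroup.disjoint_def.1 hdisj hx hx_mem
    rw [one_mul] at hd ⊢
    exact Subgroup.disjoint_def.1 hDT hd ht
  exact (le_sup_left.trans (hTmax ⟨inferInstance, hDAT⟩ le_sup_right)).trans le_sup_right

end Socle

section GEquiv

variable {V₁ V₂ V₃ : Type*} [Group V₁] [Group V₂] [Group V₃]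
  {a₁ : G →* MulAut V₁} {a₂ : G →* MulAut V₂} {a₃ : G →* MulAut V₃}

theorem GEquiv.trans (h : GEquiv G a₁ a₂) (h' : GEquiv G a₂ a₃) : GEquiv G a₁ a₃ := by
  obtain ⟨φ, Φ, hφ, hΦ⟩ := h
  obtain ⟨φ', Φ', hφ', hΦ'⟩ := h'
  exact ⟨φ.trans φ', Φ.trans Φ', fun v => by simp [hφ, hφ'], fun x => by simp [hΦ, hΦ']⟩

theorem GEquiv.of_cocycle (φ : V₁ ≃* V₂) (c : G → V₂)
    (hc : ∀ g h, c (g * h) = c g * a₂ g (c h))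
    (hφ : ∀ g v, φ (a₁ g v) = c g * a₂ g (φ v) * (c g)⁻¹) : GEquiv G a₁ a₂ := by
  have hc_one : c 1 = 1 := by simpa using hc 1 1
  refine ⟨φ,
    { toFun := fun x => ⟨φ x.left * c x.right, x.right⟩
      invFun := fun x => ⟨φ.symm (x.left * (c x.right)⁻¹), x.right⟩
      left_inv := fun x => by simp
      right_inv := fun x => by simp
      map_mul' := fun x y => ?_ }, fun v => ?_, fun x => rfl⟩
  · ext
    · simp [hc, hφ, mul_assoc]
    · simp
  · ext <;> simp [hc_one]

theorem GEquiv.socAct_of_mul_inv_mem_socle {Q L : Type*} [Group Q] [Group L] (e : Q ≃* L)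
    (p : G →* Q) (π : G →* L) (h : ∀ g, e (p g) * (π g)⁻¹ ∈ socle L) :
    GEquiv G (socAct G p) (socAct G π) := by
  refine GEquiv.of_cocycle (socleEquiv e) (fun g => ⟨e (p g) * (π g)⁻¹, h g⟩) ?_ ?_
  · intro g g'
    ext
    simp [socAct, mul_assoc]
  · intro g v
    ext
    simp [socAct, coe_socleEquiv_apply, mul_assoc]

end GEquiv

theorem exists_retraction_of_isCompl {M T : Subgroup G} [T.Normal] (h : IsCompl M T) :
    ∃ ρ : G →* M, Function.LeftInverse ρ M.subtype ∧ ρ.ker = T := by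
  have hcompl : M.IsComplement' T :=
    Subgroup.isComplement'_of_disjoint_and_mul_eq_univ h.disjoint <| by
      rw [← Subgroup.mul_normal, h.sup_eq_top, Subgroup.coe_top]
  let e := hcompl.QuotientMulEquiv
  refine ⟨(e : G ⧸ T →* M).comp (QuotientGroup.mk' T), fun m => e.apply_symm_apply m, ?_⟩
  rw [MonoidHom.ker_mulEquiv_comp, QuotientGroup.ker_mk']

theorem normal_inf_of_le_centralizer {K R U : Subgroup G} [U.Normal]
    (hRU : R ≤ Subgroup.centralizer U) (hKR : K ⊔ R = ⊤) : (K ⊓ U).Normal := by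
  rw [← Subgroup.normalizer_eq_top_iff, eq_top_iff, ← hKR]
  refine sup_le ?_ ?_
  · exact (le_inf Subgroup.le_normalizer Subgroup.le_normalizer_of_normal).trans
      Subgroup.inf_normalizer_le_normalizer_inf
  · exact hRU.trans <| (Subgroup.centralizer_le (inf_le_right : K ⊓ U ≤ U)).trans
      (Subgroup.centralizer_le_normalizer _)

section Crown

variable {V : Type*} [Group V] {a : G →* MulAut V}

theorem ker_mem_crownNormals {N : Subgroup G} [N.Normal] (hN : N ∈ crownNormals a)
    {ψ : G →* G ⧸ N} (hψ : Function.Surjective ψ)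
    (hsocle : ∀ g, ψ g * (QuotientGroup.mk' N g)⁻¹ ∈ socle (G ⧸ N)) :
    ψ.ker ∈ crownNormals a := by
  obtain ⟨_, habelian, hnonabelian, hequiv⟩ := hN
  let e : G ⧸ ψ.ker ≃* G ⧸ N := QuotientGroup.quotientKerEquivOfSurjective ψ hψ
  have hsocAct := GEquiv.socAct_of_mul_inv_mem_socle e (QuotientGroup.mk' ψ.ker)
    (QuotientGroup.mk' N) hsocle
  exact ⟨inferInstance, fun h => (habelian h).map e.trans, fun h => (hnonabelian h).map e.trans,
    hsocAct.trans hequiv⟩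

theorem map_crownSocle_le {N : Subgroup G} [N.Normal] (hRN : crownRadical a ≤ N) :
    (crownSocle a).map (QuotientGroup.mk' N) ≤ socle (G ⧸ N) := by
  let q : G ⧸ crownRadical a →* G ⧸ N := QuotientGroup.map _ N (MonoidHom.id G) hRN
  have hq : Function.Surjective q :=
    QuotientGroup.map_surjective_of_surjective _ N (MonoidHom.id G)
      (QuotientGroup.mk'_surjective N) hRN
  rintro _ ⟨x, hx, rfl⟩
  exact map_socle_le hq ⟨QuotientGroup.mk' _ x, hx, rfl⟩

theorem crownRadical_le_ker_comp_retraction {M N : Subgroup G} [N.Normal]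
    (hN : N ∈ crownNormals a) (hMR : M ⊔ crownRadical a = ⊤) {ρ : G →* M}
    (hρ : Function.LeftInverse ρ M.subtype) (hker : ρ.ker ≤ crownSocle a) :
    crownRadical a ≤ ((QuotientGroup.mk' N).comp (M.subtype.comp ρ)).ker := by
  have hRN : crownRadical a ≤ N := sInf_le hN
  refine sInf_le (ker_mem_crownNormals hN ?_ ?_)
  · intro y
    obtain ⟨g, rfl⟩ := QuotientGroup.mk'_surjective N y
    obtain ⟨m, hm, r, hr, rfl⟩ := Subgroup.mem_sup_of_normal_right.1 (hMR ▸ Subgroup.mem_top g)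
    have hρm : (ρ m : G) = m := congrArg Subtype.val (hρ ⟨m, hm⟩)
    have hr_one : QuotientGroup.mk' N r = 1 := (QuotientGroup.eq_one_iff r).2 (hRN hr)
    refine ⟨m, ?_⟩
    rw [map_mul, hr_one, mul_one, MonoidHom.comp_apply, MonoidHom.comp_apply, Subgroup.coe_subtype,
      hρm]
  · intro g
    have hmem : (ρ g : G) * g⁻¹ ∈ ρ.ker := by
      rw [MonoidHom.mem_ker, map_mul, map_inv]
      exact mul_inv_eq_one.2 (hρ (ρ g))
    exact map_crownSocle_le hRN (Subgroup.mem_map_of_mem (QuotientGroup.mk' N) (hker hmem))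

theorem le_crownRadical_of_isCompl {M T : Subgroup G} [T.Normal] (hT : T ≤ crownSocle a)
    (hMT : IsCompl M T) (hMR : M ⊔ crownRadical a = ⊤) : T ≤ crownRadical a := by
  refine le_sInf fun N hN t ht => ?_
  have hN_normal : N.Normal := hN.1
  obtain ⟨ρ, hρ, rfl⟩ := exists_retraction_of_isCompl hMT
  obtain ⟨m, hm, r, hr, rfl⟩ := Subgroup.mem_sup_of_normal_right.1 (hMR ▸ Subgroup.mem_top t)
  have hrN : r ∈ N := (sInf_le hN : crownRadical a ≤ N) hr
  have hρrN : (ρ r : G) ∈ N :=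
    (QuotientGroup.eq_one_iff _).1 (crownRadical_le_ker_comp_retraction hN hMR hρ hT hr)
  have hmρr : m * ρ r = 1 := by
    have hρm : ρ m = ⟨m, hm⟩ := hρ ⟨m, hm⟩
    rw [MonoidHom.mem_ker, map_mul, hρm] at ht
    exact congrArg Subtype.val ht
  rw [eq_inv_of_mul_eq_one_left hmρr]
  exact mul_mem (inv_mem hρrN) hrN

theorem exists_normal_complement_of_le_crownSocle {D U : Subgroup G} [D.Normal] [U.Normal]
    (hDU : D ≤ U) (hU : U ≤ crownSocle a) (hRU : Disjoint (crownRadical a) U) :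
    ∃ T : Subgroup G, T.Normal ∧ Disjoint D T ∧ D ⊔ T = U := by
  let q := QuotientGroup.mk' (crownRadical a)
  have hD_map : (D.map q).Normal :=
    Subgroup.Normal.map inferInstance q (QuotientGroup.mk'_surjective _)
  obtain ⟨S, hS, hDS, hsocle⟩ := exists_normal_disjoint_socle_le_sup (D.map q)
  refine ⟨S.comap q ⊓ U, inferInstance, ?_, le_antisymm (sup_le hDU inf_le_right) ?_⟩
  · rw [Subgroup.disjoint_def]
    rintro x hxD ⟨hxS, hxU⟩
    have hqx : q x = 1 := Subgroup.disjoint_def.1 hDS (Subgroup.mem_map_of_mem q hxD) hxS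
    exact Subgroup.disjoint_def.1 hRU ((QuotientGroup.eq_one_iff x).1 hqx) hxU
  · intro u hu
    obtain ⟨_, ⟨d, hd, rfl⟩, s, hs, hds⟩ := Subgroup.mem_sup_of_normal_right.1 (hsocle (hU hu))
    have hquot : q (d⁻¹ * u) = s := by
      rw [map_mul, map_inv, inv_mul_eq_iff_eq_mul]
      exact hds.symm
    have hmem : d⁻¹ * u ∈ S.comap q ⊓ U :=
      ⟨Subgroup.mem_comap.2 (hquot ▸ hs), U.mul_mem (U.inv_mem (hDU hd)) hu⟩
    simpa using mul_mem (Subgroup.mem_sup_left hd) (Subgroup.mem_sup_right hmem)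

end Crown

theorem eq_top_of_sup_crown_general {V : Type*} [Group V] {a : G →* MulAut V}
    {U : Subgroup G} [U.Normal] (hU : U ≤ crownSocle a) (hRU : Disjoint (crownRadical a) U)
    {K : Subgroup G} (hKU : K ⊔ U = ⊤) (hKR : K ⊔ crownRadical a = ⊤) : K = ⊤ := by
  have hcomm : crownRadical a ≤ Subgroup.centralizer U := fun r hr =>
    Subgroup.mem_centralizer_iff.2 fun u hu =>
      (Subgroup.commute_of_normal_of_disjoint _ _ inferInstance inferInstance hRU r u hr hu).symm
  have hD : (K ⊓ U).Normal := normal_inf_of_le_centralizer hcomm hKR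
  obtain ⟨T, hT, hDT, hsup⟩ :=
    exists_normal_complement_of_le_crownSocle (inf_le_right : K ⊓ U ≤ U) hU hRU
  have hTU : T ≤ U := hsup ▸ le_sup_right
  have hKT : IsCompl K T := by
    refine ⟨disjoint_iff_inf_le.2 ?_, codisjoint_iff.2 ?_⟩
    · exact (le_inf (inf_le_inf_left K hTU) inf_le_right).trans hDT.le_bot
    · rw [← hKU, ← hsup, ← sup_assoc, sup_inf_self]
  have hTR : T ≤ crownRadical a := le_crownRadical_of_isCompl (hTU.trans hU) hKT hKR
  have hT_bot : T = ⊥ := le_bot_iff.1 ((le_inf hTR hTU).trans hRU.le_bot)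
  simpa [hT_bot] using hKT.sup_eq_top

/-- **Lemma 2.2** ([crowns, Proposition 11]): with `G`, `V`, `U` as in Lemma 2.1, if
`K ≤ G` satisfies `KU = G` and `K·R_G(V) = G`, then `K = G`. -/
theorem eq_top_of_sup_crown (G : Type) [Group G] [Finite G]
    (hfrat : frattini G = ⊥)
    (V : Type) [Group V] (a : G →* MulAut V) (X Y : Subgroup G)
    (hchief : IsChiefFactorPair G X Y) (hrep : RepresentsFactor G a X Y)
    (U : Subgroup G) (hUnorm : U.Normal) (hUne : U ≠ ⊥)
    (hcrown : crownSocle a = crownRadical a ⊔ U ∧ crownRadical a ⊓ U = ⊥)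
    (K : Subgroup G) (hKU : K ⊔ U = ⊤) (hKR : K ⊔ crownRadical a = ⊤) :
    K = ⊤ := by
  exact eq_top_of_sup_crown_general (hcrown.1 ▸ le_sup_right) (disjoint_iff.2 hcrown.2) hKU hKR

end ChebotarevPaper
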